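/- (Finite Union Theorem) Let X = A ∪ B be a metric space which is the union of two subsets A and B, each given the subspace metric. Then ad_X ≈ λ ↦ max{ ad_A(λ), ad_B(λ) }, i.e. the asymptotic dimension function of X has the same growth as the maximum of the asymptotic dimension functions of A and B. -/

import Mathlib

open Metric

namespace AsDim

/-- A family of subsets is a cover if its union is everything. -/
def IsCover {X : Type*} (𝒰 : Set (Set X)) : Prop := ⋃₀ 𝒰 = Set.univ

/-- A family of subsets of a metric space is uniformly bounded if there is a
common finite bound on the diameters of its members. -/
def UnifBounded {X : Type*} [MetricSpace X] (𝒰 : Set (Set X)) : Prop :=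
  ∃ B : ℝ, 0 ≤ B ∧ ∀ U ∈ 𝒰, EMetric.diam U ≤ ENNReal.ofReal B

/-- A family has Lebesgue number at least `lam` if every subset of diameter at most
`lam` is contained in some member of the family. -/
def LebesgueGE {X : Type*} [MetricSpace X] (𝒰 : Set (Set X)) (lam : ℝ) : Prop :=
  ∀ A : Set X, EMetric.diam A ≤ ENNReal.ofReal lam → ∃ U ∈ 𝒰, A ⊆ U

/-- The multiplicity of a family: the supremum over points of the number of
members containing that point. -/
noncomputable def mult {X : Type*} (𝒰 : Set (Set X)) : ℕ∞ :=
  ⨆ x : X, {U | U ∈ 𝒰 ∧ x ∈ U}.encard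

/-- The asymptotic dimension function:
`ad_X(lam) = min { mult 𝒰 : 𝒰 a uniformly bounded cover with Lebesgue number ≥ lam } - 1`. -/
noncomputable def adFun (X : Type*) [MetricSpace X] (lam : ℝ) : ℕ∞ :=
  sInf {m : ℕ∞ | ∃ 𝒰 : Set (Set X),
    IsCover 𝒰 ∧ UnifBounded 𝒰 ∧ LebesgueGE 𝒰 lam ∧ m = mult 𝒰} - 1

/-- `f ≼ g` : there is `k ∈ ℕ` with `f x ≤ k * g (k*x+k) + k` for all `x > 0`. -/
def GrowLE (f g : ℝ → ℕ∞) : Prop :=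
  ∃ k : ℕ, ∀ x : ℝ, 0 < x → f x ≤ (k : ℕ∞) * g ((k : ℝ) * x + (k : ℝ)) + (k : ℕ∞)

/-- `f ≈ g` : same growth. -/
def GrowEquiv (f g : ℝ → ℕ∞) : Prop := GrowLE f g ∧ GrowLE g f

/-- `asdim X ≤ n`. -/
def AsdimLE (X : Type*) [MetricSpace X] (n : ℕ) : Prop :=
  ∀ lam : ℝ, 0 < lam → ∃ 𝒰 : Set (Set X),
    IsCover 𝒰 ∧ UnifBounded 𝒰 ∧ LebesgueGE 𝒰 lam ∧ mult 𝒰 ≤ (n : ℕ∞) + 1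

/-- Bounded geometry (as a discrete space): uniform finite bound on the
cardinality of balls of each radius. -/
def BoundedGeometry (X : Type*) [MetricSpace X] : Prop :=
  ∀ r : ℝ, 0 < r → ∃ c : ℕ, ∀ x : X, (Metric.closedBall x r).encard ≤ (c : ℕ∞)

/-- `(lam, eps, C)`-quasi-isometry. -/
def IsQuasiIsometry {X Y : Type*} [MetricSpace X] [MetricSpace Y]
    (lam eps C : ℝ) (f : X → Y) : Prop :=
  1 ≤ lam ∧ 0 ≤ eps ∧ 0 ≤ C ∧
  (∀ x x' : X, (1 / lam) * dist x x' - eps ≤ dist (f x) (f x') ∧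
      dist (f x) (f x') ≤ lam * dist x x' + eps) ∧
  (∀ y : Y, ∃ x : X, dist y (f x) ≤ C)

/-- Two metric spaces are quasi-isometric if some quasi-isometry exists. -/
def QuasiIsometric (X Y : Type*) [MetricSpace X] [MetricSpace Y] : Prop :=
  ∃ (lam eps C : ℝ) (f : X → Y), IsQuasiIsometry lam eps C f

/-- Word distance with respect to a generating set `S`. -/
noncomputable def wordDist {Γ : Type*} [Group Γ] (S : Set Γ) (g h : Γ) : ℕ :=
  sInf {n : ℕ | ∃ l : List Γ, (∀ x ∈ l, x ∈ S) ∧ l.length = n ∧ l.prod = g⁻¹ * h}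

/-- The metric on the group `Γ` is the word metric of the finite symmetric
generating set `S`. -/
def IsWordMetric {Γ : Type*} [Group Γ] [MetricSpace Γ] (S : Finset Γ) : Prop :=
  (∀ s ∈ S, s⁻¹ ∈ S) ∧ Subgroup.closure (S : Set Γ) = ⊤ ∧
  ∀ g h : Γ, dist g h = wordDist (S : Set Γ) g h

end AsDim

/- Covers of `X` restrict to a subset by taking preimages. Conversely, extend a cover of a subset to
`X` as follows: from each member `U`, keep the points whose `2r`-ball in the subset lies in `U`, and
enlarge this core by `r` in `X`. If `x` lies within `r` of some point `y` of the subset, then every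
extended member containing `x` comes from a member containing `y`, so the multiplicity does not
grow. A set of diameter at most `r` through `y` lies in the extension of any member that contains
the `2r`-ball about `y`, and such a member exists if the Lebesgue number is at least `4r`. The
extensions of optimal covers of `A` and `B` at scale `4r` together form a cover of `X` at scale `r`,
with at most the sum of the two multiplicities. -/

namespace AsDim

section Multiplicity

variable {X Y : Type*}

lemma mult_image_le {𝒰 : Set (Set Y)} (φ : Set Y → Set X)
    (hφ : ∀ x U, x ∈ φ U → ∃ y, ∀ V, x ∈ φ V → y ∈ V) : mult (φ '' 𝒰) ≤ mult 𝒰 := by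
  refine iSup_le fun x => ?_
  by_cases hx : ∃ U, x ∈ φ U
  · obtain ⟨U, hU⟩ := hx
    obtain ⟨y, hy⟩ := hφ x U hU
    have hsub : {W | W ∈ φ '' 𝒰 ∧ x ∈ W} ⊆ φ '' {V | V ∈ 𝒰 ∧ y ∈ V} := by
      rintro _ ⟨⟨V, hV, rfl⟩, hxV⟩
      exact ⟨V, ⟨hV, hy V hxV⟩, rfl⟩
    calc {W | W ∈ φ '' 𝒰 ∧ x ∈ W}.encard
        ≤ (φ '' {V | V ∈ 𝒰 ∧ y ∈ V}).encard := Set.encard_le_encard hsub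
      _ ≤ {V | V ∈ 𝒰 ∧ y ∈ V}.encard := Set.encard_image_le _ _
      _ ≤ mult 𝒰 := le_iSup (fun y => {V | V ∈ 𝒰 ∧ y ∈ V}.encard) y
  · have hempty : {W | W ∈ φ '' 𝒰 ∧ x ∈ W} = ∅ := by
      refine Set.eq_empty_of_forall_notMem ?_
      rintro _ ⟨⟨V, -, rfl⟩, hxV⟩
      exact hx ⟨V, hxV⟩
    rw [hempty, Set.encard_empty]
    exact zero_le

lemma mult_union_le (𝒰 𝒱 : Set (Set X)) : mult (𝒰 ∪ 𝒱) ≤ mult 𝒰 + mult 𝒱 := by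
  refine iSup_le fun x => ?_
  have hsplit : {W | W ∈ 𝒰 ∪ 𝒱 ∧ x ∈ W} = {W | W ∈ 𝒰 ∧ x ∈ W} ∪ {W | W ∈ 𝒱 ∧ x ∈ W} :=
    Set.union_inter_distrib_right 𝒰 𝒱 {W | x ∈ W}
  rw [hsplit]
  exact (Set.encard_union_le _ _).trans
    (add_le_add (le_iSup (fun x => {W | W ∈ 𝒰 ∧ x ∈ W}.encard) x)
      (le_iSup (fun x => {W | W ∈ 𝒱 ∧ x ∈ W}.encard) x))

end Multiplicity

section MetricSpace

variable {X Y Z : Type*} [MetricSpace X] [MetricSpace Y] [MetricSpace Z]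

lemma UnifBounded.union {𝒰 𝒱 : Set (Set X)} (h𝒰 : UnifBounded 𝒰) (h𝒱 : UnifBounded 𝒱) :
    UnifBounded (𝒰 ∪ 𝒱) := by
  obtain ⟨B, hB, hB𝒰⟩ := h𝒰
  obtain ⟨C, -, hC𝒱⟩ := h𝒱
  refine ⟨max B C, le_max_of_le_left hB, ?_⟩
  rintro W (hW | hW)
  · exact (hB𝒰 W hW).trans (ENNReal.ofReal_le_ofReal (le_max_left B C))
  · exact (hC𝒱 W hW).trans (ENNReal.ofReal_le_ofReal (le_max_right B C))

lemma LebesgueGE.isCover {𝒰 : Set (Set X)} {lam : ℝ} (h : LebesgueGE 𝒰 lam) : IsCover 𝒰 := by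
  refine Set.eq_univ_of_forall fun x => ?_
  obtain ⟨U, hU, hxU⟩ := h {x} (ediam_singleton.trans_le zero_le)
  exact ⟨U, hU, Set.singleton_subset_iff.1 hxU⟩

lemma LebesgueGE.anti {𝒰 : Set (Set X)} {lam mu : ℝ} (h : LebesgueGE 𝒰 mu) (hle : lam ≤ mu) :
    LebesgueGE 𝒰 lam :=
  fun S hS => h S (hS.trans (ENNReal.ofReal_le_ofReal hle))

lemma exists_unifBounded_lebesgueGE (X : Type*) [MetricSpace X] (lam : ℝ) :
    ∃ 𝒰 : Set (Set X), UnifBounded 𝒰 ∧ LebesgueGE 𝒰 lam := by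
  refine ⟨{U | ediam U ≤ ENNReal.ofReal lam}, ⟨max lam 0, le_max_right lam 0, fun U hU => ?_⟩,
    fun S hS => ⟨S, hS, subset_rfl⟩⟩
  exact hU.trans (ENNReal.ofReal_le_ofReal (le_max_left lam 0))

lemma adFun_le_iff {lam : ℝ} {n : ℕ∞} :
    adFun X lam ≤ n ↔
      ∃ 𝒰 : Set (Set X), UnifBounded 𝒰 ∧ LebesgueGE 𝒰 lam ∧ mult 𝒰 ≤ n + 1 := by
  rw [adFun, tsub_le_iff_right]
  constructor
  · intro h
    have hne : {m : ℕ∞ | ∃ 𝒰 : Set (Set X),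
        IsCover 𝒰 ∧ UnifBounded 𝒰 ∧ LebesgueGE 𝒰 lam ∧ m = mult 𝒰}.Nonempty := by
      obtain ⟨𝒰, hb, hL⟩ := exists_unifBounded_lebesgueGE X lam
      exact ⟨mult 𝒰, 𝒰, hL.isCover, hb, hL, rfl⟩
    obtain ⟨𝒰, -, hb, hL, hmin⟩ := csInf_mem hne
    exact ⟨𝒰, hb, hL, hmin ▸ h⟩
  · rintro ⟨𝒰, hb, hL, hm⟩
    refine (sInf_le ?_).trans hm
    exact ⟨𝒰, hL.isCover, hb, hL, rfl⟩

lemma adFun_mono (X : Type*) [MetricSpace X] : Monotone (adFun X) := by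
  intro lam mu hle
  obtain ⟨𝒰, hb, hL, hm⟩ := adFun_le_iff.1 (le_refl (adFun X mu))
  exact adFun_le_iff.2 ⟨𝒰, hb, hL.anti hle, hm⟩

lemma UnifBounded.image_preimage {f : Y → X} (hf : Isometry f) {𝒰 : Set (Set X)}
    (h : UnifBounded 𝒰) : UnifBounded (Set.preimage f '' 𝒰) := by
  obtain ⟨B, hB, hB𝒰⟩ := h
  refine ⟨B, hB, ?_⟩
  rintro _ ⟨U, hU, rfl⟩
  calc ediam (f ⁻¹' U) = ediam (f '' (f ⁻¹' U)) := (hf.ediam_image _).symm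
    _ ≤ ediam U := ediam_mono (Set.image_preimage_subset f U)
    _ ≤ ENNReal.ofReal B := hB𝒰 U hU

lemma LebesgueGE.image_preimage {f : Y → X} (hf : Isometry f) {𝒰 : Set (Set X)} {lam : ℝ}
    (h : LebesgueGE 𝒰 lam) : LebesgueGE (Set.preimage f '' 𝒰) lam := by
  intro S hS
  obtain ⟨U, hU, hSU⟩ := h (f '' S) ((hf.ediam_image S).trans_le hS)
  exact ⟨f ⁻¹' U, ⟨U, hU, rfl⟩, Set.image_subset_iff.1 hSU⟩

lemma adFun_le_of_isometry {f : Y → X} (hf : Isometry f) (lam : ℝ) :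
    adFun Y lam ≤ adFun X lam := by
  obtain ⟨𝒰, hb, hL, hm⟩ := adFun_le_iff.1 (le_refl (adFun X lam))
  have hmult : mult (Set.preimage f '' 𝒰) ≤ mult 𝒰 :=
    mult_image_le _ fun y _ _ => ⟨f y, fun _ hV => hV⟩
  exact adFun_le_iff.2 ⟨Set.preimage f '' 𝒰, hb.image_preimage hf, hL.image_preimage hf,
    hmult.trans hm⟩

/-- The extension of `U ⊆ Y` along `f : Y → X`: the closed `r`-neighbourhood in `X` of the image of
the core `{y | closedBall y (2 * r) ⊆ U}`. The radius `2 * r` makes core points within `r` of a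
common point of `X` lie in each other's sets. -/
def coreThickening (f : Y → X) (r : ℝ) (U : Set Y) : Set X :=
  {x | ∃ y, dist x (f y) ≤ r ∧ closedBall y (2 * r) ⊆ U}

lemma coreThickening_subset_cthickening (f : Y → X) {r : ℝ} (hr : 0 ≤ r) (U : Set Y) :
    coreThickening f r U ⊆ cthickening r (f '' U) := by
  rintro x ⟨y, hxy, hyU⟩
  have hy : y ∈ U := hyU (mem_closedBall_self (by positivity))
  exact mem_cthickening_of_dist_le x (f y) r _ (Set.mem_image_of_mem f hy) hxy

lemma UnifBounded.image_coreThickening {f : Y → X} (hf : Isometry f) {r : ℝ} (hr : 0 ≤ r)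
    {𝒰 : Set (Set Y)} (h : UnifBounded 𝒰) : UnifBounded (coreThickening f r '' 𝒰) := by
  obtain ⟨B, hB, hB𝒰⟩ := h
  refine ⟨B + 2 * r, by positivity, ?_⟩
  rintro _ ⟨U, hU, rfl⟩
  calc ediam (coreThickening f r U)
      ≤ ediam (cthickening r (f '' U)) := ediam_mono (coreThickening_subset_cthickening f hr U)
    _ ≤ ediam (f '' U) + 2 * ENNReal.ofReal r := by
      simpa [hr, ENNReal.ofReal] using ediam_cthickening_le (s := f '' U) r.toNNReal
    _ ≤ ENNReal.ofReal B + 2 * ENNReal.ofReal r := by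
      rw [hf.ediam_image]
      gcongr
      exact hB𝒰 U hU
    _ = ENNReal.ofReal (B + 2 * r) := by
      rw [ENNReal.ofReal_add hB (by positivity), ENNReal.ofReal_mul zero_le_two,
        ENNReal.ofReal_ofNat]

lemma mult_coreThickening_le {f : Y → X} (hf : Isometry f) (r : ℝ) (𝒰 : Set (Set Y)) :
    mult (coreThickening f r '' 𝒰) ≤ mult 𝒰 := by
  refine mult_image_le _ ?_
  rintro x - ⟨y, hxy, -⟩
  refine ⟨y, ?_⟩
  rintro V ⟨z, hxz, hzV⟩
  refine hzV (mem_closedBall.2 ?_)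
  calc dist y z = dist (f y) (f z) := (hf.dist_eq y z).symm
    _ ≤ dist x (f y) + dist x (f z) := dist_triangle_left _ _ _
    _ ≤ 2 * r := by linarith

lemma LebesgueGE.exists_subset_coreThickening {f : Y → X} {r : ℝ} (hr : 0 ≤ r)
    {𝒰 : Set (Set Y)} (h : LebesgueGE 𝒰 (4 * r)) {S : Set X}
    (hS : ediam S ≤ ENNReal.ofReal r) {y : Y} (hy : f y ∈ S) :
    ∃ U ∈ 𝒰, S ⊆ coreThickening f r U := by
  have hball : ediam (closedBall y (2 * r)) ≤ ENNReal.ofReal (4 * r) := by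
    refine ediam_le_of_forall_dist_le fun a ha b hb => ?_
    calc dist a b ≤ dist a y + dist b y := dist_triangle_right a b y
      _ ≤ 2 * r + 2 * r := add_le_add ha hb
      _ = 4 * r := by ring
  obtain ⟨U, hU, hyU⟩ := h _ hball
  refine ⟨U, hU, fun x hx => ⟨y, ?_, hyU⟩⟩
  have hxy := (edist_le_ediam_of_mem hx hy).trans hS
  rwa [edist_dist, ENNReal.ofReal_le_ofReal_iff hr] at hxy

lemma LebesgueGE.image_coreThickening_union {f : Y → X} {g : Z → X}
    (hfg : Set.range f ∪ Set.range g = Set.univ) {r : ℝ} (hr : 0 ≤ r) {𝒰 : Set (Set Y)}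
    {𝒱 : Set (Set Z)} (h𝒰 : LebesgueGE 𝒰 (4 * r)) (h𝒱 : LebesgueGE 𝒱 (4 * r)) :
    LebesgueGE (coreThickening f r '' 𝒰 ∪ coreThickening g r '' 𝒱) r := by
  intro S hS
  rcases S.eq_empty_or_nonempty with rfl | ⟨x, hx⟩
  · obtain ⟨U, hU, -⟩ := h𝒰 ∅ (ediam_empty.trans_le zero_le)
    exact ⟨_, Or.inl ⟨U, hU, rfl⟩, Set.empty_subset _⟩
  rcases hfg.ge (Set.mem_univ x) with ⟨y, rfl⟩ | ⟨z, rfl⟩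
  · obtain ⟨U, hU, hSU⟩ := h𝒰.exists_subset_coreThickening hr hS hx
    exact ⟨_, Or.inl ⟨U, hU, rfl⟩, hSU⟩
  · obtain ⟨V, hV, hSV⟩ := h𝒱.exists_subset_coreThickening hr hS hx
    exact ⟨_, Or.inr ⟨V, hV, rfl⟩, hSV⟩

theorem adFun_le_add_of_range_union_range {f : Y → X} {g : Z → X} (hf : Isometry f)
    (hg : Isometry g) (hfg : Set.range f ∪ Set.range g = Set.univ) {r : ℝ} (hr : 0 ≤ r) :
    adFun X r ≤ adFun Y (4 * r) + adFun Z (4 * r) + 1 := by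
  obtain ⟨𝒰, hb𝒰, hL𝒰, hm𝒰⟩ := adFun_le_iff.1 (le_refl (adFun Y (4 * r)))
  obtain ⟨𝒱, hb𝒱, hL𝒱, hm𝒱⟩ := adFun_le_iff.1 (le_refl (adFun Z (4 * r)))
  refine adFun_le_iff.2 ⟨coreThickening f r '' 𝒰 ∪ coreThickening g r '' 𝒱,
    (hb𝒰.image_coreThickening hf hr).union (hb𝒱.image_coreThickening hg hr),
    hL𝒰.image_coreThickening_union hfg hr hL𝒱, ?_⟩
  calc mult (coreThickening f r '' 𝒰 ∪ coreThickening g r '' 𝒱)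
      ≤ mult (coreThickening f r '' 𝒰) + mult (coreThickening g r '' 𝒱) := mult_union_le _ _
    _ ≤ mult 𝒰 + mult 𝒱 :=
      add_le_add (mult_coreThickening_le hf r 𝒰) (mult_coreThickening_le hg r 𝒱)
    _ ≤ (adFun Y (4 * r) + 1) + (adFun Z (4 * r) + 1) := add_le_add hm𝒰 hm𝒱
    _ = adFun Y (4 * r) + adFun Z (4 * r) + 1 + 1 := by ring

end MetricSpace

lemma GrowLE.of_monotone {f g : ℝ → ℕ∞} (hg : Monotone g) (k : ℕ)
    (h : ∀ x, 0 < x → f x ≤ k * g (k * x) + k) : GrowLE f g := by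
  refine ⟨k, fun x hx => (h x hx).trans ?_⟩
  gcongr
  exact hg (le_add_of_nonneg_right k.cast_nonneg)

/-- Finite union theorem for the asymptotic dimension function. -/
theorem adFun_union_two {X : Type*} [MetricSpace X] (A B : Set X)
    (hAB : A ∪ B = Set.univ) :
    GrowEquiv (adFun X) (fun lam => max (adFun ↥A lam) (adFun ↥B lam)) := by
  have hA : Isometry ((↑) : A → X) := isometry_subtype_coe
  have hB : Isometry ((↑) : B → X) := isometry_subtype_coe
  constructor
  · refine .of_monotone ((adFun_mono A).max (adFun_mono B)) 4 fun x hx => ?_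
    have hrange : Set.range ((↑) : A → X) ∪ Set.range ((↑) : B → X) = Set.univ := by
      rwa [Subtype.range_coe, Subtype.range_coe]
    calc adFun X x ≤ adFun A (4 * x) + adFun B (4 * x) + 1 :=
          adFun_le_add_of_range_union_range hA hB hrange hx.le
      _ ≤ 2 * max (adFun A (4 * x)) (adFun B (4 * x)) + 1 := by
          rw [two_mul]
          gcongr
          exacts [le_max_left _ _, le_max_right _ _]
      _ ≤ 4 * max (adFun A (4 * x)) (adFun B (4 * x)) + 4 := by gcongr <;> norm_num
  · refine .of_monotone (adFun_mono X) 1 fun x _ => ?_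
    simpa using (max_le (adFun_le_of_isometry hA x) (adFun_le_of_isometry hB x)).trans
      le_self_add

end AsDim
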